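/- arXiv:1812.06626 — 4 statements merged into one kernel-verified Lean document; each statement's English description precedes it below -/
import Mathlib

section
/- Let λ > 0 and let F₁, …, Fₙ be classifiers, where Fᵢ : X → Yᵢ has oracle O_{Fᵢ} : X → Yᵢ and each Fᵢ is λ-resilient. Let G : (Y₁ × ⋯ × Yₙ) → Z be a classifier on n-tuples of feature labels with oracle O_G : (Y₁ × ⋯ × Yₙ) → Z, and suppose there is a mapping O_L : Z → Y₁ × ⋯ × Yₙ satisfying O_L(O_G(t)) = t for every tuple t (O_L inverts the oracle O_G) and O_L(G(t)) = t for every tuple t (G agrees with its oracle). Define the parallel composition R : X → Z by R(x) = G(⟨F₁(x), …, Fₙ(x)⟩) and its oracle by O_R(x) = O_G(⟨O_{F₁}(x), …, O_{Fₙ}(x)⟩). Then for every input x ∈ X and all labels z₁, z₂ ∈ Z with O_L(z₁) ≠ O_L(z₂) and R(x) = z₁, there is no perturbation γ ∈ X with 0 < ‖γ‖ < λ such that R(x+γ) = z₂ and O_R(x) = O_R(x+γ) = z₂. (Parallel Composition Resilience theorem.) -/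
/-- An input `x` is `lam`-adversarial for classifier `F` with oracle `O`. -/
def Adversarial {X Y : Type*} [SeminormedAddCommGroup X]
    (F O : X → Y) (lam : ℝ) (x : X) : Prop :=
  F x ≠ O x ∧ ∃ γ : X, ‖γ‖ ≤ lam ∧ F (x + γ) = O (x + γ) ∧ O (x + γ) = O x

/-- `F` is `lam`-resilient with respect to oracle `O`: no `lam`-adversarial inputs. -/
def Resilient {X Y : Type*} [SeminormedAddCommGroup X]
    (F O : X → Y) (lam : ℝ) : Prop :=
  ∀ x : X, ¬ Adversarial F O lam x

theorem parallel_composition_resilience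
    {X Z : Type*} [SeminormedAddCommGroup X]
    (n : ℕ) (Y : Fin n → Type*)
    (lam : ℝ) (hlam : 0 < lam)
    (F : ∀ i : Fin n, X → Y i) (OF : ∀ i : Fin n, X → Y i)
    (hF : ∀ i : Fin n, Resilient (F i) (OF i) lam)
    (G : (∀ i : Fin n, Y i) → Z) (OG : (∀ i : Fin n, Y i) → Z)
    (OL : Z → ∀ i : Fin n, Y i)
    (hinv : ∀ t : ∀ i : Fin n, Y i, OL (OG t) = t)
    (hagree : ∀ t : ∀ i : Fin n, Y i, OL (G t) = t)
    (R : X → Z) (hR : ∀ x : X, R x = G (fun i => F i x))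
    (OR : X → Z) (hOR : ∀ x : X, OR x = OG (fun i => OF i x)) :
    ∀ (x : X) (z₁ z₂ : Z), OL z₁ ≠ OL z₂ → R x = z₁ →
      ¬ ∃ γ : X, 0 < ‖γ‖ ∧ ‖γ‖ < lam ∧
        R (x + γ) = z₂ ∧ OR x = OR (x + γ) ∧ OR (x + γ) = z₂ := by
  rintro x z₁ z₂ hne h1 ⟨γ, _, hlt, hR2, hO1, hO2⟩
  apply hne
  have a1 : OL z₁ = fun i => F i x := by rw [← h1, hR, hagree]
  have a2 : OL z₂ = fun i => F i (x + γ) := by rw [← hR2, hR, hagree]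
  have a3 : OL z₂ = fun i => OF i (x + γ) := by rw [← hO2, hOR, hinv]
  have a4 : OL z₂ = fun i => OF i x := by rw [← hO2, ← hO1, hOR, hinv]
  rw [a1, a4]
  funext i
  by_contra hc
  exact hF i x ⟨hc, γ, hlt.le, congrFun (a2.symm.trans a3) i, congrFun (a3.symm.trans a4) i⟩
end

section
/- Let λ > 0 and let F₁, …, Fₙ be classifiers, where Fᵢ : X → Yᵢ has oracle O_{Fᵢ} : X → Yᵢ and each Fᵢ is λ-resilient. Let G : (Y₁ × ⋯ × Yₙ) → Z be injective and suppose G coincides with its own oracle, i.e., the composed classifier's oracle is O_R(x) = G(⟨O_{F₁}(x), …, O_{Fₙ}(x)⟩). Then the parallel composition R(x) = G(⟨F₁(x), …, Fₙ(x)⟩) is λ-resilient with respect to the oracle O_R. (Parallel Composition Resilience, classifier-level form: combining n λ-resilient feature extractors through a correct injective classifier yields a λ-resilient classifier.) -/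
theorem parallel_composition_resilience_classifier
    {X Z : Type*} [SeminormedAddCommGroup X]
    (n : ℕ) (Y : Fin n → Type*)
    (lam : ℝ) (hlam : 0 < lam)
    (F : ∀ i : Fin n, X → Y i) (OF : ∀ i : Fin n, X → Y i)
    (hF : ∀ i : Fin n, Resilient (F i) (OF i) lam)
    (G : (∀ i : Fin n, Y i) → Z) (hG : Function.Injective G) :
    Resilient (fun x => G (fun i => F i x)) (fun x => G (fun i => OF i x)) lam := by
  rintro x ⟨hne, γ, hγ, h1, h2⟩
  apply hne
  have h1' := hG h1
  have h2' := hG h2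
  refine congrArg G (funext fun i => ?_)
  by_contra hi
  exact hF i x ⟨hi, γ, hγ, congrFun h1' i, congrFun h2' i⟩
end

section
/- Let λ > 0 and suppose the classifier F : X → Y is λ-resilient with respect to its oracle O_F. Let G : Y → Z be a classifier with oracle O_G : Y → Z, and suppose there is a mapping O_L : Z → Y with O_L(O_G(y)) = y and O_L(G(y)) = y for every y ∈ Y. Define R = G ∘ F and O_R = O_G ∘ O_F. Then for every input x ∈ X and every perturbation γ ∈ X with 0 < ‖γ‖ < λ, if R(x+γ) = O_R(x+γ) and O_R(x+γ) = O_R(x), then O_L(R(x)) = O_L(R(x+γ)); that is, any successful attack within distortion λ on the composed classifier cannot change the extracted feature label, so attacks are only possible between output classes that share the same extracted feature. -/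
theorem serial_composition_attack_preserves_feature
    {X Y Z : Type*} [SeminormedAddCommGroup X]
    (lam : ℝ) (hlam : 0 < lam)
    (F : X → Y) (OF : X → Y) (hF : Resilient F OF lam)
    (G : Y → Z) (OG : Y → Z) (OL : Z → Y)
    (hinv : ∀ y : Y, OL (OG y) = y)
    (hagree : ∀ y : Y, OL (G y) = y)
    (R : X → Z) (hR : ∀ x : X, R x = G (F x))
    (OR : X → Z) (hOR : ∀ x : X, OR x = OG (OF x)) :
    ∀ (x γ : X), 0 < ‖γ‖ → ‖γ‖ < lam →
      R (x + γ) = OR (x + γ) → OR (x + γ) = OR x →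
      OL (R x) = OL (R (x + γ)) := by
  intro x γ _ hlt h1 h2
  have a : F (x + γ) = OF (x + γ) := by
    rw [← hagree (F (x + γ)), ← hR, h1, hOR, hinv]
  have b : OF (x + γ) = OF x := by
    rw [← hinv (OF (x + γ)), ← hOR, h2, hOR, hinv]
  have c : F x = OF x := by
    by_contra hne
    exact hF x ⟨hne, γ, hlt.le, a, b⟩
  rw [hR, hR, hagree, hagree, a, b, c]
end

section
/- Let λ > 0 and let F₁, …, Fₙ be classifiers, where Fᵢ : X → Yᵢ has oracle O_{Fᵢ} and each Fᵢ is λ-resilient. Let G : (Y₁ × ⋯ × Yₙ) → Z have oracle O_G, and suppose there is a mapping O_L : Z → Y₁ × ⋯ × Yₙ with O_L(O_G(t)) = t and O_L(G(t)) = t for every tuple t. Define R(x) = G(⟨F₁(x), …, Fₙ(x)⟩) and O_R(x) = O_G(⟨O_{F₁}(x), …, O_{Fₙ}(x)⟩). Then for every input x ∈ X and every perturbation γ ∈ X with 0 < ‖γ‖ < λ, if R(x+γ) = O_R(x+γ) and O_R(x+γ) = O_R(x), then O_L(R(x)) = O_L(R(x+γ)); that is, any successful attack within distortion λ on the composed classifier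 cannot change the tuple of extracted feature labels, so attacks are only possible between output classes that share the same set of extracted features. -/
theorem parallel_composition_attack_preserves_features
    {X Z : Type*} [SeminormedAddCommGroup X]
    (n : ℕ) (Y : Fin n → Type*)
    (lam : ℝ) (hlam : 0 < lam)
    (F : ∀ i : Fin n, X → Y i) (OF : ∀ i : Fin n, X → Y i)
    (hF : ∀ i : Fin n, Resilient (F i) (OF i) lam)
    (G : (∀ i : Fin n, Y i) → Z) (OG : (∀ i : Fin n, Y i) → Z)
    (OL : Z → ∀ i : Fin n, Y i)
    (hinv : ∀ t : ∀ i : Fin n, Y i, OL (OG t) = t)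
    (hagree : ∀ t : ∀ i : Fin n, Y i, OL (G t) = t)
    (R : X → Z) (hR : ∀ x : X, R x = G (fun i => F i x))
    (OR : X → Z) (hOR : ∀ x : X, OR x = OG (fun i => OF i x)) :
    ∀ (x γ : X), 0 < ‖γ‖ → ‖γ‖ < lam →
      R (x + γ) = OR (x + γ) → OR (x + γ) = OR x →
      OL (R x) = OL (R (x + γ)) := by
  intro x γ _ hγ h1 h2
  have e1 : (fun i => F i (x + γ)) = fun i => OF i (x + γ) := by
    rw [← hagree (fun i => F i (x + γ)), ← hR, h1, hOR, hinv]
  have e2 : (fun i => OF i (x + γ)) = fun i => OF i x := by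
    rw [← hinv (fun i => OF i (x + γ)), ← hOR, h2, hOR, hinv]
  rw [hR, hR, hagree, hagree, e1, e2]
  funext i
  by_contra hne
  exact hF i x ⟨hne, γ, hγ.le, congrFun e1 i, congrFun e2 i⟩
end
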